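/- Assume 𝕜 contains ℚ. Let G^{(1)}, H^{(1)} ⊆ GL^{(1)}_𝕜(M) be subgroups and T_G, T_H ⊆ End^{(1)}_𝕜(M) be 𝕜-submodules. Assume the 'truncated exponential/logarithm' correspondences hold for both pairs, namely: (a) for every z ∈ M, every ξ ∈ T_G with ord(ξz) < ∞, and every integer N ≥ ord(ξz), there exists g ∈ G^{(1)} with g − Σ_{j=0}^{N} ξ^j/j! ∈ End^{(N+1)}_𝕜(M); (b) for every z ∈ M, every g ∈ G^{(1)} with ord((g−1)z) < ∞, and every integer N ≥ ord((g−1)z), there exists ξ ∈ T_G with ξ − Σ_{j=1}^{N} (−1)^{j+1}(g−1)^j/j ∈ End^{(N+1)}_𝕜(M); and the analogous conditions (a),(b) for the pair (T_H, H^{(1)}). Assume further that the subgroup generated by G^{(1)} ∪ H^{(1)} equals G^{(1)}·H^{(1)} := {g·h : g ∈ G^{(1)}, h ∈ H^{(1)}} and that [T_G, T_H] ⊆ T_H, where [ξ,η] := ξ∘η − η∘ξ. Then the pair (T_G + T_H, G^{(1)}·H^{(1)}) is pointwise of Lie type for the index 1. -/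

import Mathlib

variable {𝕜 M : Type*} [CommRing 𝕜] [Algebra ℚ 𝕜] [AddCommGroup M] [Module 𝕜 M]

/-- `End^{(i)}` : the 𝕜-submodule of endomorphisms shifting the filtration by `i`. -/
def EndS (Mf : ℕ → Submodule 𝕜 M) (i : ℕ) : Submodule 𝕜 (Module.End 𝕜 M) where
  carrier := {φ | ∀ j : ℕ, ∀ x ∈ Mf j, φ x ∈ Mf (j + i)}
  add_mem' := by
    intro a b ha hb j x hx
    simpa [LinearMap.add_apply] using add_mem (ha j x hx) (hb j x hx)
  zero_mem' := by
    intro j x hx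
    simpa using (Mf (j + i)).zero_mem
  smul_mem' := by
    intro c a ha j x hx
    simpa [LinearMap.smul_apply] using Submodule.smul_mem _ c (ha j x hx)

/-- `GL^{(i)}` (for `i ≥ 1`). -/
def GLFil (Mf : ℕ → Submodule 𝕜 M) (i : ℕ) : Set (Module.End 𝕜 M)ˣ :=
  {u | (∀ j : ℕ, ∀ x ∈ Mf j, (u : Module.End 𝕜 M) x ∈ Mf j) ∧
    (∀ j : ℕ, ∀ x ∈ Mf j, ((u⁻¹ : (Module.End 𝕜 M)ˣ) : Module.End 𝕜 M) x ∈ Mf j) ∧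
    ((u : Module.End 𝕜 M) - 1) ∈ EndS Mf i ∧
    (((u⁻¹ : (Module.End 𝕜 M)ˣ) : Module.End 𝕜 M) - 1) ∈ EndS Mf i}

/-- `ord(z) = sup {j : z ∈ M_j} ∈ ℕ ∪ {∞}`. -/
noncomputable def ordM (Mf : ℕ → Submodule 𝕜 M) (z : M) : ℕ∞ :=
  ⨆ j ∈ {j : ℕ | z ∈ Mf j}, (j : ℕ∞)

/-- The truncated exponential `Σ_{j=0}^{N} ξ^j/j!`. -/
noncomputable def truncExp (ξ : Module.End 𝕜 M) (N : ℕ) : Module.End 𝕜 M :=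
  ∑ j ∈ Finset.range (N + 1), algebraMap ℚ 𝕜 ((j.factorial : ℚ)⁻¹) • ξ ^ j

/-- The truncated logarithm `Σ_{j=1}^{N} (−1)^{j+1}(g−1)^j/j`. -/
noncomputable def truncLog (φ : Module.End 𝕜 M) (N : ℕ) : Module.End 𝕜 M :=
  ∑ j ∈ Finset.Icc 1 N, algebraMap ℚ 𝕜 (((-1 : ℚ) ^ (j + 1)) / (j : ℚ)) • φ ^ j

/-- The truncated exponential/logarithm correspondence for the pair `(T, G)`. -/
def HasTruncExpLog (Mf : ℕ → Submodule 𝕜 M) (T : Submodule 𝕜 (Module.End 𝕜 M))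
    (G : Subgroup (Module.End 𝕜 M)ˣ) : Prop :=
  (∀ z : M, ∀ ξ ∈ T, ordM Mf (ξ z) < ⊤ → ∀ N : ℕ, ordM Mf (ξ z) ≤ (N : ℕ∞) →
    ∃ g : (Module.End 𝕜 M)ˣ, g ∈ G ∧
      ((g : Module.End 𝕜 M) - truncExp ξ N) ∈ EndS Mf (N + 1)) ∧
  (∀ z : M, ∀ g : (Module.End 𝕜 M)ˣ, g ∈ G →
    ordM Mf (((g : Module.End 𝕜 M) - 1) z) < ⊤ → ∀ N : ℕ,
    ordM Mf (((g : Module.End 𝕜 M) - 1) z) ≤ (N : ℕ∞) →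
    ∃ ξ ∈ T, (ξ - truncLog ((g : Module.End 𝕜 M) - 1) N) ∈ EndS Mf (N + 1))


section NilpotentLog

variable {R : Type*} [Ring R] [Algebra ℚ R]

/-- The logarithm series of `1 + a`, truncated after degree `N`. -/
noncomputable def nilLog (N : ℕ) (a : R) : R :=
  ∑ j ∈ Finset.Icc 1 N, ((-1 : ℚ) ^ (j + 1) / (j : ℚ)) • a ^ j

theorem map_nilLog {S F : Type*} [Ring S] [Algebra ℚ S] [FunLike F R S] [RingHomClass F R S]
    (f : F) (N : ℕ) (a : R) : f (nilLog N a) = nilLog N (f a) := by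
  simp [nilLog, map_sum, map_rat_smul]

open Polynomial in
theorem one_add_X_mul_derivative_nilLog (N : ℕ) :
    (1 + X) * derivative (nilLog N (X : ℚ[X])) = 1 - (-X) ^ N := by
  induction N with
  | zero => simp [nilLog]
  | succ N ih =>
    have h : nilLog (N + 1) (X : ℚ[X])
        = nilLog N X + ((-1 : ℚ) ^ (N + 2) / ((N + 1 : ℕ) : ℚ)) • X ^ (N + 1) := by
      rw [nilLog, Finset.sum_Icc_succ_top (by omega)]
      rfl
    have h2 : derivative (((-1 : ℚ) ^ (N + 2) / ((N + 1 : ℕ) : ℚ)) • (X : ℚ[X]) ^ (N + 1))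
        = (-X) ^ N := by
      have h3 : ((N + 1 : ℕ) : ℚ) ≠ 0 := by positivity
      rw [derivative_smul, derivative_X_pow, smul_eq_C_mul, ← mul_assoc, ← C_mul,
        div_mul_cancel₀ _ h3, neg_pow (X : ℚ[X]) N, pow_add]
      simp
    rw [h, derivative_add, mul_add, ih, h2]
    ring

open Polynomial in
theorem X_pow_dvd_truncated_exp_nilLog (N : ℕ) :
    (X : ℚ[X]) ^ (N + 1) ∣
      ∑ i ∈ Finset.range (N + 1), ((i.factorial : ℚ)⁻¹) • nilLog N (X : ℚ[X]) ^ i - (1 + X) := by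
  set l : ℚ[X] := nilLog N X with hl
  have hXl : X ∣ l := by
    refine Finset.dvd_sum fun j hj ↦ ?_
    rw [smul_eq_C_mul]
    exact (dvd_pow_self _ (by have := (Finset.mem_Icc.mp hj).1; omega)).mul_left _
  set f : ℚ[X] := ∑ i ∈ Finset.range (N + 1), ((i.factorial : ℚ)⁻¹) • l ^ i with hf
  have hder : derivative f = (f - ((N.factorial : ℚ)⁻¹) • l ^ N) * derivative l := by
    have h1 : f - ((N.factorial : ℚ)⁻¹) • l ^ N
        = ∑ i ∈ Finset.range N, ((i.factorial : ℚ)⁻¹) • l ^ i := by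
      rw [hf, Finset.sum_range_succ, add_sub_cancel_right]
    rw [h1, hf, Finset.sum_range_succ', derivative_add, derivative_sum, Finset.sum_mul]
    simp only [derivative_smul, derivative_pow_succ]
    simp only [Nat.factorial_zero, pow_zero, derivative_one, smul_zero, add_zero]
    refine Finset.sum_congr rfl fun i _ ↦ ?_
    have h2 : ((i + 1).factorial : ℚ)⁻¹ * ((i : ℚ) + 1) = ((i.factorial : ℚ)⁻¹) := by
      have : (i.factorial : ℚ) ≠ 0 := by positivity
      rw [Nat.factorial_succ]
      push_cast
      field_simp
    rw [← h2]
    simp only [smul_eq_C_mul, C_mul]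
    ring
  set p : ℚ[X] := f - (1 + X) with hp
  have hmain : X ^ N ∣ (1 + X) * derivative p - p := by
    have h1 : (1 + X) * derivative p - p = - ((N.factorial : ℚ)⁻¹) • l ^ N
        - (f - ((N.factorial : ℚ)⁻¹) • l ^ N) * (-X) ^ N := by
      have h2 : (1 + X) * derivative f
          = (f - ((N.factorial : ℚ)⁻¹) • l ^ N) * (1 - (-X) ^ N) := by
        rw [hder, ← one_add_X_mul_derivative_nilLog N, ← hl]
        ring
      rw [hp, derivative_sub, mul_sub, h2]
      simp only [derivative_add, derivative_one, derivative_X, neg_smul]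
      ring
    rw [h1]
    refine dvd_sub ?_ ?_
    · rw [smul_eq_C_mul]
      exact (pow_dvd_pow_of_dvd hXl N).mul_left _
    · rw [neg_pow]
      exact ((dvd_refl _).mul_left _).mul_left _
  have h0 : p.coeff 0 = 0 := by
    have hl0 : l.coeff 0 = 0 := X_dvd_iff.mp hXl
    rw [hp, hf, Finset.sum_range_succ', coeff_sub, coeff_add, finsetSum_coeff]
    have : ∀ i, (l ^ (i + 1)).coeff 0 = 0 := fun i ↦ by
      rw [pow_succ, mul_coeff_zero, hl0, mul_zero]
    simp [this]
  have hcoeff : ∀ n < N + 1, p.coeff n = 0 := by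
    intro n
    induction n with
    | zero => exact fun _ ↦ h0
    | succ n ih =>
      intro hn
      have h1 := X_pow_dvd_iff.mp hmain n (by omega)
      have h2 := ih (by omega)
      have h3 : (derivative p).coeff n = 0 := by
        cases n with
        | zero =>
          rw [coeff_sub, h2, add_mul, one_mul, coeff_add, mul_coeff_zero] at h1
          simpa using h1
        | succ m =>
          rw [coeff_sub, h2, add_mul, one_mul, coeff_add, coeff_X_mul, coeff_derivative p m,
            h2] at h1
          simpa using h1
      rw [coeff_derivative] at h3
      exact (mul_eq_zero.mp h3).resolve_right (by positivity)
  exact X_pow_dvd_iff.mpr hcoeff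

open Polynomial in
theorem exp_nilLog {N : ℕ} {a : R} (ha : a ^ (N + 1) = 0) :
    IsNilpotent.exp (nilLog N a) = 1 + a := by
  obtain ⟨q, hq⟩ := X_pow_dvd_truncated_exp_nilLog N
  have h := congrArg (aeval a) hq
  have hl : nilLog N a ^ (N + 1) = 0 := by
    have hXl : (X : ℚ[X]) ∣ nilLog N X := by
      refine Finset.dvd_sum fun j hj ↦ ?_
      rw [smul_eq_C_mul]
      exact (dvd_pow_self _ (by have := (Finset.mem_Icc.mp hj).1; omega)).mul_left _
    obtain ⟨r, hr⟩ := hXl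
    have h2 := congrArg (aeval a) (congrArg (· ^ (N + 1)) hr)
    simpa [map_nilLog, mul_pow, ha] using h2
  rw [IsNilpotent.exp_eq_sum hl]
  simpa [map_nilLog, ha, sub_eq_zero] using h

open Polynomial in
theorem Polynomial.coeff_mem_of_forall_eval_natCast_mem {T : Submodule ℚ R} {p : R[X]}
    (hp : ∀ n : ℕ, p.eval (n : R) ∈ T) (k : ℕ) : p.coeff k ∈ T := by
  rw [← Submodule.Quotient.mk_eq_zero, ← Module.forall_dual_apply_eq_zero_iff ℚ]
  intro f
  set F : R →ₗ[ℚ] ℚ := f ∘ₗ T.mkQ with hF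
  set q : ℚ[X] := ∑ i ∈ Finset.range (p.natDegree + 1), C (F (p.coeff i)) * X ^ i with hq
  have hq0 : q = 0 := by
    refine eq_of_infinite_eval_eq _ _ (Set.infinite_of_injective_forall_mem
      (f := fun n : ℕ ↦ (n : ℚ)) Nat.cast_injective fun n ↦ ?_)
    have h1 : F (p.eval (n : R)) = 0 := by
      rw [hF, LinearMap.comp_apply, T.mkQ_apply, (Submodule.Quotient.mk_eq_zero T).mpr (hp n),
        map_zero]
    have h2 (i : ℕ) : p.coeff i * (n : R) ^ i = (n : ℚ) ^ i • p.coeff i := by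
      rw [Algebra.smul_def, map_pow, map_natCast]
      exact ((Nat.cast_commute n _).pow_left i).symm
    rw [eval_eq_sum_range, map_sum] at h1
    simp only [h2, map_smul, smul_eq_mul] at h1
    simp only [Set.mem_ofPred_eq, hq, eval_finsetSum, eval_mul, eval_C, eval_pow, eval_X, eval_zero]
    rw [← h1]
    exact Finset.sum_congr rfl fun i _ ↦ mul_comm _ _
  by_cases hk : k < p.natDegree + 1
  · have h := congrArg (fun r ↦ r.coeff k) hq0
    simpa [hq, finsetSum_coeff, coeff_C_mul, coeff_X_pow, hk, hF] using h
  · rw [coeff_eq_zero_of_natDegree_lt (by omega), Submodule.Quotient.mk_zero, map_zero]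

theorem IsNilpotent.exp_nsmul {a : R} (ha : IsNilpotent a) (n : ℕ) :
    IsNilpotent.exp (n • a) = IsNilpotent.exp a ^ n := by
  induction n with
  | zero => simp
  | succ n ih =>
    rw [succ_nsmul, IsNilpotent.exp_add_of_commute ((Commute.refl a).smul_left n)
      (ha.smul n) ha, ih, _root_.pow_succ]

theorem IsNilpotent.exp_conj {a u v : R} (ha : IsNilpotent a) (huv : u * v = 1) (hvu : v * u = 1) :
    IsNilpotent.exp (u * a * v) = u * IsNilpotent.exp a * v := by
  obtain ⟨k, hk⟩ := ha
  have hpow (i : ℕ) : (u * a * v) ^ i = u * a ^ i * v :=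
    Units.conj_pow ⟨u, v, huv, hvu⟩ a i
  have hk' : (u * a * v) ^ k = 0 := by simp [hpow, hk]
  rw [IsNilpotent.exp_eq_sum hk, IsNilpotent.exp_eq_sum hk', Finset.mul_sum, Finset.sum_mul]
  refine Finset.sum_congr rfl fun i _ ↦ ?_
  rw [hpow, mul_smul_comm, smul_mul_assoc]

/-- A subspace stable under `ad x`, with `x` nilpotent, is stable under conjugation by `exp x`. -/
theorem IsNilpotent.exp_mul_mul_exp_neg_mem {T : Submodule ℚ R} {x y : R} (hx : IsNilpotent x)
    (hT : ∀ z ∈ T, x * z - z * x ∈ T) (hy : y ∈ T) :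
    IsNilpotent.exp x * y * IsNilpotent.exp (-x) ∈ T := by
  obtain ⟨k, hk⟩ := hx
  set l : Module.End ℚ R := LinearMap.mulLeft ℚ x with hl
  set r : Module.End ℚ R := LinearMap.mulRight ℚ (-x) with hr
  have hlk : l ^ k = 0 := by rw [hl, LinearMap.pow_mulLeft, hk, LinearMap.mulLeft_zero_eq_zero]
  have hrk : r ^ k = 0 := by
    rw [hr, LinearMap.pow_mulRight, neg_pow, hk, mul_zero, LinearMap.mulRight_zero_eq_zero]
  have hxk : (-x) ^ k = 0 := by rw [neg_pow, hk, mul_zero]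
  have hc : Commute l r := LinearMap.commute_mulLeft_right x (-x)
  have hlr : IsNilpotent.exp (l + r) y = IsNilpotent.exp x * y * IsNilpotent.exp (-x) := by
    rw [IsNilpotent.exp_add_of_commute hc ⟨k, hlk⟩ ⟨k, hrk⟩, Module.End.mul_apply]
    have h1 (z : R) : IsNilpotent.exp l z = IsNilpotent.exp x * z := by
      rw [IsNilpotent.exp_eq_sum hlk, IsNilpotent.exp_eq_sum hk]
      simp [Finset.sum_mul, hl, LinearMap.pow_mulLeft]
    have h2 (z : R) : IsNilpotent.exp r z = z * IsNilpotent.exp (-x) := by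
      rw [IsNilpotent.exp_eq_sum hrk, IsNilpotent.exp_eq_sum hxk]
      simp only [Finset.mul_sum, hr, LinearMap.pow_mulRight, LinearMap.sum_apply,
        LinearMap.smul_apply, LinearMap.mulRight_apply, mul_smul_comm]
    rw [h1, h2, mul_assoc]
  have hD (i : ℕ) : ((l + r) ^ i) y ∈ T := by
    induction i with
    | zero => simpa using hy
    | succ i ih =>
      rw [pow_succ', Module.End.mul_apply]
      simpa [hl, hr, sub_eq_add_neg] using hT _ ih
  obtain ⟨m, hm⟩ := hc.isNilpotent_add ⟨k, hlk⟩ ⟨k, hrk⟩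
  rw [← hlr, IsNilpotent.exp_eq_sum hm, LinearMap.sum_apply]
  exact T.sum_mem fun i _ ↦ T.smul_mem _ (hD i)

open Polynomial in
theorem coeff_exp_C_mul_X {a : R} (ha : IsNilpotent a) (i : ℕ) :
    (IsNilpotent.exp (C a * X)).coeff i = (i.factorial : ℚ)⁻¹ • a ^ i := by
  obtain ⟨k, hk⟩ := ha
  have hpow (j : ℕ) : (C a * X) ^ j = C (a ^ j) * X ^ j := by
    rw [(commute_X (C a)).symm.mul_pow, C_pow]
  have hm : (C a * X) ^ (k + i + 1) = 0 := by
    rw [hpow, pow_eq_zero_of_le (by omega) hk, C_0, zero_mul]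
  rw [IsNilpotent.exp_eq_sum hm, finsetSum_coeff, Finset.sum_eq_single i]
  · rw [hpow, coeff_smul, coeff_C_mul_X_pow, if_pos rfl]
  · intro j _ hj
    rw [hpow, coeff_smul, coeff_C_mul_X_pow, if_neg hj.symm, smul_zero]
  · intro h
    exact absurd (Finset.mem_range.mpr (by omega)) h

open Polynomial in
theorem isNilpotent_C_mul_X {S : Type*} [Ring S] {a : S} (ha : IsNilpotent a) :
    IsNilpotent (C a * X) :=
  (commute_X (C a)).symm.isNilpotent_mul_right (ha.map C)

open Polynomial in
theorem coeff_one_nilLog {N : ℕ} (hN : 1 ≤ N) {p : R[X]} (hp : p.coeff 0 = 0) :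
    (nilLog N p).coeff 1 = p.coeff 1 := by
  have h0 (j : ℕ) (hj : j ≠ 0) : (p ^ j).coeff 0 = 0 := by
    obtain ⟨m, rfl⟩ := Nat.exists_eq_succ_of_ne_zero hj
    rw [pow_succ, mul_coeff_zero, hp, mul_zero]
  rw [nilLog, finsetSum_coeff, Finset.sum_eq_single 1]
  · simp
  · intro j hj hj1
    have := (Finset.mem_Icc.mp hj).1
    obtain ⟨m, rfl⟩ := Nat.exists_eq_succ_of_ne_zero (show j ≠ 0 by omega)
    rw [coeff_smul, pow_succ p, mul_coeff_one, hp, h0 m (by omega)]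
    simp
  · intro h
    exact absurd (Finset.mem_Icc.mpr ⟨le_rfl, hN⟩) h

/-- A multiplicative filtration of `R` whose term of index `N + 1` vanishes. -/
structure IsTruncatedFiltration (F : ℕ → Submodule ℚ R) (N : ℕ) : Prop where
  antitone : Antitone F
  one_mem : (1 : R) ∈ F 0
  mul_mem : ∀ {i j : ℕ} {a b : R}, a ∈ F i → b ∈ F j → a * b ∈ F (i + j)
  eq_bot : F (N + 1) = ⊥

/-- A subspace `T` of the first filtration step and a monoid `G` matched by `exp` and `log`. -/
structure IsExpLogPair (F : ℕ → Submodule ℚ R) (N : ℕ) (T : Submodule ℚ R)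
    (G : Submonoid R) : Prop where
  le : T ≤ F 1
  sub_one_mem : ∀ g ∈ G, g - 1 ∈ F 1
  exp_mem : ∀ x ∈ T, IsNilpotent.exp x ∈ G
  log_mem : ∀ g ∈ G, nilLog N (g - 1) ∈ T

namespace IsTruncatedFiltration

variable {F : ℕ → Submodule ℚ R} {N : ℕ} (hF : IsTruncatedFiltration F N)
include hF

theorem pow_mem {a : R} {i : ℕ} (ha : a ∈ F i) (k : ℕ) : a ^ k ∈ F (i * k) := by
  induction k with
  | zero => simpa using hF.one_mem
  | succ k ih => simpa [pow_succ, Nat.mul_succ] using hF.mul_mem ih ha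

theorem pow_eq_zero {a : R} (ha : a ∈ F 1) : a ^ (N + 1) = 0 := by
  have h := hF.pow_mem ha (N + 1)
  rwa [one_mul, hF.eq_bot, Submodule.mem_bot] at h

theorem isNilpotent {a : R} (ha : a ∈ F 1) : IsNilpotent a :=
  ⟨N + 1, hF.pow_eq_zero ha⟩

theorem nilLog_mem {a : R} (ha : a ∈ F 1) : nilLog N a ∈ F 1 :=
  (F 1).sum_mem fun j hj ↦ (F 1).smul_mem _
    (hF.antitone (by have := (Finset.mem_Icc.mp hj).1; omega) (hF.pow_mem ha j))

theorem exp_nilLog_sub_one {u : R} (hu : u - 1 ∈ F 1) :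
    IsNilpotent.exp (nilLog N (u - 1)) = u := by
  rw [exp_nilLog (hF.pow_eq_zero hu), add_sub_cancel]

theorem exp_sub_one_sub_mem {a : R} {i : ℕ} (hi : 1 ≤ i) (ha : a ∈ F i) :
    IsNilpotent.exp a - 1 - a ∈ F (i + 1) := by
  have ha1 : a ^ (N + 2) = 0 := by
    rw [pow_succ, hF.pow_eq_zero (hF.antitone hi ha), zero_mul]
  rw [IsNilpotent.exp_eq_sum ha1, Finset.sum_range_succ', Finset.sum_range_succ']
  have h (S : R) : S + (((0 + 1).factorial : ℕ) : ℚ)⁻¹ • a ^ (0 + 1)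
      + ((Nat.factorial 0 : ℕ) : ℚ)⁻¹ • a ^ 0 - 1 - a = S := by
    simp
  rw [h]
  refine (F _).sum_mem fun j _ ↦ (F _).smul_mem _ (hF.antitone ?_ (hF.pow_mem ha (j + 1 + 1)))
  nlinarith

theorem exp_sub_one_mem {a : R} (ha : a ∈ F 1) : IsNilpotent.exp a - 1 ∈ F 1 := by
  have h := (F 1).add_mem (hF.antitone (by omega) (hF.exp_sub_one_sub_mem le_rfl ha)) ha
  rwa [sub_add_cancel] at h

theorem mul_sub_one_mem {u v : R} (hu : u - 1 ∈ F 1) (hv : v - 1 ∈ F 1) : u * v - 1 ∈ F 1 := by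
  have h : u * v - 1 = (u - 1) * (v - 1) + (u - 1) + (v - 1) := by noncomm_ring
  rw [h]
  exact (F 1).add_mem ((F 1).add_mem (hF.antitone (by omega) (hF.mul_mem hu hv)) hu) hv

theorem pow_sub_pow_mem {a b : R} {i : ℕ} (ha : a ∈ F 1) (hb : b ∈ F 1) (hab : b - a ∈ F i)
    (k : ℕ) : b ^ (k + 1) - a ^ (k + 1) ∈ F (i + k) := by
  induction k with
  | zero => simpa using hab
  | succ k ih =>
    have h : b ^ (k + 1 + 1) - a ^ (k + 1 + 1)
        = (b ^ (k + 1) - a ^ (k + 1)) * b + a ^ (k + 1) * (b - a) := by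
      rw [pow_succ b, pow_succ a (k + 1)]
      noncomm_ring
    rw [h]
    refine (F _).add_mem (by simpa [add_assoc] using hF.mul_mem ih hb) ?_
    have h2 := hF.mul_mem (hF.pow_mem ha (k + 1)) hab
    rwa [one_mul, show k + 1 + i = i + (k + 1) by omega] at h2

theorem nilLog_sub_nilLog_mem (hN : 1 ≤ N) {a b : R} {i : ℕ} (ha : a ∈ F 1) (hb : b ∈ F 1)
    (hab : b - a ∈ F i) : nilLog N b - nilLog N a - (b - a) ∈ F (i + 1) := by
  obtain ⟨n, rfl⟩ := Nat.exists_eq_add_of_le' hN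
  have h : nilLog (n + 1) b - nilLog (n + 1) a - (b - a)
      = ∑ j ∈ Finset.Ioc 1 (n + 1),
          ((-1 : ℚ) ^ (j + 1) / (j : ℚ)) • (b ^ j - a ^ j) := by
    simp only [nilLog, smul_sub, Finset.sum_sub_distrib]
    rw [← Finset.add_sum_Ioc_eq_sum_Icc hN, ← Finset.add_sum_Ioc_eq_sum_Icc hN]
    simp
    abel
  rw [h]
  refine (F _).sum_mem fun j hj ↦ (F _).smul_mem _ ?_
  obtain ⟨m, rfl⟩ := Nat.exists_eq_add_of_le' (Finset.mem_Ioc.mp hj).1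
  exact hF.antitone (by omega) (hF.pow_sub_pow_mem ha hb hab (m + 1))

variable {T T' : Submodule ℚ R} {G G' : Submonoid R}

/-- Conjugation by `exp x` preserves `G'` if `ad x` preserves its tangent space. -/
theorem exp_neg_mul_mul_exp_mem (hG' : IsExpLogPair F N T' G') {x h : R} (hx : x ∈ F 1)
    (hxT : ∀ y ∈ T', x * y - y * x ∈ T') (hh : h ∈ G') :
    IsNilpotent.exp (-x) * h * IsNilpotent.exp x ∈ G' := by
  have hxn := hF.isNilpotent hx
  set y := nilLog N (h - 1) with hy
  have hyT : y ∈ T' := hG'.log_mem h hh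
  have hyh : IsNilpotent.exp y = h := hF.exp_nilLog_sub_one (hG'.sub_one_mem h hh)
  rw [← hyh, ← IsNilpotent.exp_conj (hF.isNilpotent (hG'.le hyT)) hxn.exp_neg_mul_exp_self
    hxn.exp_mul_exp_neg_self]
  refine hG'.exp_mem _ ?_
  have h := hxn.neg.exp_mul_mul_exp_neg_mem (T := T') (y := y) (fun z hz ↦ ?_) hyT
  · rwa [neg_neg] at h
  · have := T'.neg_mem (hxT z hz)
    rwa [show -x * z - z * -x = -(x * z - z * x) by noncomm_ring]

open Polynomial in
/-- The logarithm of `exp x * h` is congruent to `x` modulo the tangent space of `G'`: the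
logarithms of the elements `exp (-n x) * (exp x * h) ^ n` of `G'` depend polynomially on `n`. -/
theorem nilLog_exp_mul_sub_mem (hN : 1 ≤ N) (hG' : IsExpLogPair F N T' G') {x h : R}
    (hx : x ∈ F 1) (hxT : ∀ y ∈ T', x * y - y * x ∈ T') (hh : h ∈ G') :
    nilLog N (IsNilpotent.exp x * h - 1) - x ∈ T' := by
  have hxn := hF.isNilpotent hx
  set e := IsNilpotent.exp x with he
  set e' := IsNilpotent.exp (-x) with he'
  have h_inv_right : e * e' = 1 := hxn.exp_mul_exp_neg_self
  have h_inv_left : e' * e = 1 := hxn.exp_neg_mul_exp_self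
  have hu : e * h - 1 ∈ F 1 := hF.mul_sub_one_mem (hF.exp_sub_one_mem hx) (hG'.sub_one_mem h hh)
  set l := nilLog N (e * h - 1) with hl
  have hln : IsNilpotent l := hF.isNilpotent (hF.nilLog_mem hu)
  have hel : IsNilpotent.exp l = e * h := hF.exp_nilLog_sub_one hu
  have hpow (n : ℕ) : e' ^ n * (e * h) ^ n ∈ G' := by
    induction n with
    | zero => simp
    | succ n ih =>
      have h1 := G'.mul_mem (hF.exp_neg_mul_mul_exp_mem hG' hx hxT ih) hh
      have h2 : e' ^ (n + 1) * (e * h) ^ (n + 1) = e' * (e' ^ n * (e * h) ^ n) * e * h := by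
        rw [pow_succ', pow_succ (e * h)]
        noncomm_ring
      rwa [h2]
  set p : R[X] := IsNilpotent.exp (C (-x) * X) * IsNilpotent.exp (C l * X) - 1 with hp
  have hcomm (n : ℕ) (a : R) : Commute (RingHom.id R a) (n : R) := (Nat.cast_commute n a).symm
  have heval (n : ℕ) : (nilLog N p).eval (n : R) = nilLog N (e' ^ n * (e * h) ^ n - 1) := by
    have h1 (q : R[X]) : q.eval (n : R) = eval₂RingHom' (RingHom.id R) (n : R) (hcomm n) q := rfl
    have h2 (a : R) (ha : IsNilpotent a) :
        eval₂RingHom' (RingHom.id R) (n : R) (hcomm n) (IsNilpotent.exp (C a * X))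
          = IsNilpotent.exp a ^ n := by
      rw [IsNilpotent.map_exp (isNilpotent_C_mul_X ha), ← ha.exp_nsmul, ← h1, eval_C_mul, eval_X,
        nsmul_eq_mul, (Nat.cast_commute n a).eq]
    rw [h1, map_nilLog, hp, map_sub, map_mul, h2 _ hxn.neg, h2 _ hln, map_one, hel]
  have hmem := coeff_mem_of_forall_eval_natCast_mem (T := T') (p := nilLog N p)
    (fun n ↦ by rw [heval]; exact hG'.log_mem _ (hpow n)) 1
  have hp0 : p.coeff 0 = 0 := by
    rw [hp, coeff_sub, mul_coeff_zero, coeff_exp_C_mul_X hxn.neg, coeff_exp_C_mul_X hln]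
    simp
  have hp1 : p.coeff 1 = l - x := by
    rw [hp, coeff_sub, mul_coeff_one]
    simp only [coeff_exp_C_mul_X hxn.neg, coeff_exp_C_mul_X hln]
    simp [coeff_one, sub_eq_add_neg]
  rwa [coeff_one_nilLog hN hp0, hp1] at hmem

theorem exists_exp_add_eq_exp_mul (hN : 1 ≤ N) (hG' : IsExpLogPair F N T' G') {x y : R}
    (hx : x ∈ F 1) (hxT : ∀ y ∈ T', x * y - y * x ∈ T') (hy : y ∈ T') :
    ∃ h ∈ G', IsNilpotent.exp (x + y) = IsNilpotent.exp x * h := by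
  set e := IsNilpotent.exp x with he
  have hu {h : R} (hh : h ∈ G') : e * h - 1 ∈ F 1 :=
    hF.mul_sub_one_mem (hF.exp_sub_one_mem hx) (hG'.sub_one_mem h hh)
  have happrox (k : ℕ) : ∃ h ∈ G', x + y - nilLog N (e * h - 1) ∈ F (k + 1) := by
    induction k with
    | zero =>
      exact ⟨1, G'.one_mem, (F 1).sub_mem ((F 1).add_mem hx (hG'.le hy))
        (hF.nilLog_mem (hu G'.one_mem))⟩
    | succ k ih =>
      obtain ⟨h, hh, hk⟩ := ih
      set d := x + y - nilLog N (e * h - 1) with hd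
      have hdT : d ∈ T' := by
        have h1 := T'.sub_mem hy (hF.nilLog_exp_mul_sub_mem hN hG' hx hxT hh)
        rwa [show y - (nilLog N (e * h - 1) - x) = d by rw [hd]; abel] at h1
      have hh' : h * IsNilpotent.exp d ∈ G' := G'.mul_mem hh (hG'.exp_mem d hdT)
      refine ⟨_, hh', ?_⟩
      have hdiff : (e * (h * IsNilpotent.exp d) - 1) - (e * h - 1) - d ∈ F (k + 1 + 1) := by
        have h1 : (e * (h * IsNilpotent.exp d) - 1) - (e * h - 1) - d
            = (e * h - 1) * (IsNilpotent.exp d - 1 - d) + (e * h - 1) * d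
              + (IsNilpotent.exp d - 1 - d) := by
          noncomm_ring
        have h2 := hF.exp_sub_one_sub_mem (by omega) hk
        rw [h1]
        refine (F _).add_mem ((F _).add_mem ?_ ?_) h2
        · exact hF.antitone (by omega) (hF.mul_mem (hu hh) h2)
        · exact hF.antitone (by omega) (hF.mul_mem (hu hh) hk)
      have hdiff' : (e * (h * IsNilpotent.exp d) - 1) - (e * h - 1) ∈ F (k + 1) := by
        have h1 := (F _).add_mem (hF.antitone (by omega) hdiff) hk
        rwa [sub_add_cancel] at h1
      have h3 := hF.nilLog_sub_nilLog_mem hN (hu hh) (hu hh') hdiff'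
      have h4 := (F _).neg_mem ((F _).add_mem h3 hdiff)
      convert h4 using 1
      rw [hd]
      abel
  obtain ⟨h, hh, hk⟩ := happrox N
  refine ⟨h, hh, ?_⟩
  rw [hF.eq_bot, Submodule.mem_bot, sub_eq_zero] at hk
  rw [hk, hF.exp_nilLog_sub_one (hu hh)]

theorem exp_add_mem_mul (hN : 1 ≤ N) (hG : IsExpLogPair F N T G) (hG' : IsExpLogPair F N T' G')
    (hTT' : ∀ x ∈ T, ∀ y ∈ T', x * y - y * x ∈ T') {x y : R} (hx : x ∈ T) (hy : y ∈ T') :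
    ∃ g ∈ G, ∃ h ∈ G', IsNilpotent.exp (x + y) = g * h := by
  obtain ⟨h, hh, heq⟩ := hF.exists_exp_add_eq_exp_mul hN hG' (hG.le hx) (hTT' x hx) hy
  exact ⟨_, hG.exp_mem x hx, h, hh, heq⟩

theorem nilLog_mul_mem (hN : 1 ≤ N) (hG : IsExpLogPair F N T G) (hG' : IsExpLogPair F N T' G')
    (hTT' : ∀ x ∈ T, ∀ y ∈ T', x * y - y * x ∈ T') {g h : R} (hg : g ∈ G) (hh : h ∈ G') :
    ∃ x ∈ T, ∃ y ∈ T', nilLog N (g * h - 1) = x + y := by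
  have hx := hG.log_mem g hg
  have hmem := hF.nilLog_exp_mul_sub_mem hN hG' (hG.le hx) (hTT' _ hx) hh
  rw [hF.exp_nilLog_sub_one (hG.sub_one_mem g hg)] at hmem
  exact ⟨_, hx, _, hmem, (add_sub_cancel _ _).symm⟩

end IsTruncatedFiltration

end NilpotentLog

section Descent

variable {Q : Type*} [AddCommGroup Q] [Module 𝕜 Q]

section

omit [Algebra ℚ 𝕜]

theorem lt_ordM_iff {Mf : ℕ → Submodule 𝕜 M} (hMf : Antitone Mf) {z : M} {n : ℕ} :
    (n : ℕ∞) < ordM Mf z ↔ z ∈ Mf (n + 1) := by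
  simp only [ordM, lt_iSup_iff, Set.mem_ofPred_eq, Nat.cast_lt, exists_prop]
  exact ⟨fun ⟨j, hj, hnj⟩ ↦ hMf hnj hj, fun h ↦ ⟨n + 1, h, n.lt_succ_self⟩⟩

theorem mem_of_le_ordM {Mf : ℕ → Submodule 𝕜 M} (hMf0 : Mf 0 = ⊤) (hMf : Antitone Mf) {z : M}
    {n : ℕ} (h : (n : ℕ∞) ≤ ordM Mf z) : z ∈ Mf n := by
  cases n with
  | zero => simp [hMf0]
  | succ n => exact (lt_ordM_iff hMf).mp (lt_of_lt_of_le (by exact_mod_cast n.lt_succ_self) h)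

theorem one_le_ordM_apply {Mf : ℕ → Submodule 𝕜 M} (hMf0 : Mf 0 = ⊤) (hMf : Antitone Mf)
    {φ : Module.End 𝕜 M} (hφ : φ ∈ EndS Mf 1) (z : M) : 1 ≤ ordM Mf (φ z) := by
  have h : ((0 : ℕ) : ℕ∞) < ordM Mf (φ z) :=
    (lt_ordM_iff hMf).mpr (hφ 0 z (by simp [hMf0]))
  exact Order.one_le_iff_pos.mpr (by simpa using h)

theorem units_mul_sub_one_mem_EndS {Mf : ℕ → Submodule 𝕜 M} {i : ℕ} {g h : (Module.End 𝕜 M)ˣ}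
    (hg : g ∈ GLFil Mf i) (hh : h ∈ GLFil Mf i) :
    ((g * h : (Module.End 𝕜 M)ˣ) : Module.End 𝕜 M) - 1 ∈ EndS Mf i := by
  have h1 : ((g * h : (Module.End 𝕜 M)ˣ) : Module.End 𝕜 M) - 1
      = (g : Module.End 𝕜 M) * ((h : Module.End 𝕜 M) - 1) + ((g : Module.End 𝕜 M) - 1) := by
    rw [Units.val_mul]
    noncomm_ring
  rw [h1]
  exact (EndS Mf i).add_mem (fun j x hx ↦ hg.1 _ _ (hh.2.2.1 j x hx)) hg.2.2.1

/-- The endomorphism `ψ` of `Q` is induced by the endomorphism `φ` of `M` along `π`. -/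
def Descends (π : M →ₗ[𝕜] Q) (φ : Module.End 𝕜 M) (ψ : Module.End 𝕜 Q) : Prop :=
  ∀ x, ψ (π x) = π (φ x)

namespace Descends

variable {π : M →ₗ[𝕜] Q} {φ φ' : Module.End 𝕜 M} {ψ ψ' : Module.End 𝕜 Q}

theorem zero : Descends π 0 0 := fun x ↦ by simp

theorem one : Descends π 1 1 := fun x ↦ by simp

theorem add (h : Descends π φ ψ) (h' : Descends π φ' ψ') : Descends π (φ + φ') (ψ + ψ') :=
  fun x ↦ by simp [h x, h' x]

theorem sub (h : Descends π φ ψ) (h' : Descends π φ' ψ') : Descends π (φ - φ') (ψ - ψ') :=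
  fun x ↦ by simp [h x, h' x]

theorem mul (h : Descends π φ ψ) (h' : Descends π φ' ψ') : Descends π (φ * φ') (ψ * ψ') :=
  fun x ↦ by simp [h (φ' x), h' x]

theorem smul (c : 𝕜) (h : Descends π φ ψ) : Descends π (c • φ) (c • ψ) :=
  fun x ↦ by simp [h x]

theorem pow (h : Descends π φ ψ) (k : ℕ) : Descends π (φ ^ k) (ψ ^ k) := by
  induction k with
  | zero => simpa using one
  | succ k ih => simpa [pow_succ] using ih.mul h

theorem sum {ι : Type*} (s : Finset ι) {f : ι → Module.End 𝕜 M} {f' : ι → Module.End 𝕜 Q}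
    (h : ∀ i ∈ s, Descends π (f i) (f' i)) : Descends π (∑ i ∈ s, f i) (∑ i ∈ s, f' i) :=
  fun x ↦ by
    simp only [LinearMap.sum_apply, map_sum]
    exact Finset.sum_congr rfl fun i hi ↦ h i hi x

theorem ext (hπ : Function.Surjective π) (h : Descends π φ ψ) (h' : Descends π φ ψ') : ψ = ψ' := by
  refine LinearMap.ext fun y ↦ ?_
  obtain ⟨x, rfl⟩ := hπ y
  rw [h x, h' x]

theorem congr (h : Descends π φ ψ) (hφ : ∀ x, (φ' - φ) x ∈ LinearMap.ker π) : Descends π φ' ψ :=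
  fun x ↦ by
    have h1 := hφ x
    rw [LinearMap.mem_ker, LinearMap.sub_apply, map_sub, sub_eq_zero] at h1
    rw [h x, h1]

end Descends

theorem exists_descends_mkQ {Mf : ℕ → Submodule 𝕜 M} (hMf : Antitone Mf) {φ : Module.End 𝕜 M}
    (hφ : φ ∈ EndS Mf 1) (n : ℕ) : ∃ ψ, Descends (Mf n).mkQ φ ψ :=
  ⟨(Mf n).mapQ (Mf n) φ fun x hx ↦ hMf (Nat.le_succ n) (hφ n x hx), fun _ ↦ rfl⟩

end

variable [Module ℚ Q]

omit [Algebra ℚ 𝕜] in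
theorem exp_apply_of_apply_apply_eq_zero {ψ : Module.End 𝕜 Q} (hψ : IsNilpotent ψ) {y : Q}
    (hy : ψ (ψ y) = 0) : IsNilpotent.exp ψ y = y + ψ y := by
  have h := IsNilpotent.exp_smul_eq_sum (a := ψ) (m := y) (k := 2)
    (by simpa [pow_two] using hy) hψ
  simpa [Finset.sum_range_succ] using h

theorem nilLog_apply_of_apply_apply_eq_zero {N : ℕ} (hN : 1 ≤ N) {ψ : Module.End 𝕜 Q} {y : Q}
    (hy : ψ (ψ y) = 0) : nilLog N ψ y = ψ y := by
  rw [nilLog, LinearMap.sum_apply, Finset.sum_eq_single 1]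
  · simp
  · intro j hj hj1
    have := (Finset.mem_Icc.mp hj).1
    obtain ⟨m, rfl⟩ := Nat.exists_eq_add_of_le' (show 2 ≤ j by omega)
    simp [pow_add, pow_two, hy]
  · intro h
    exact absurd (Finset.mem_Icc.mpr ⟨le_rfl, hN⟩) h

namespace Descends

variable {π : M →ₗ[𝕜] Q} {φ : Module.End 𝕜 M} {ψ : Module.End 𝕜 Q}

theorem rat_smul (q : ℚ) (h : Descends π φ ψ) :
    Descends π (algebraMap ℚ 𝕜 q • φ) (q • ψ) := by
  rw [← algebraMap_smul 𝕜 q ψ]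
  exact h.smul _

theorem truncExp {N : ℕ} (h : Descends π φ ψ) (hψ : ψ ^ (N + 1) = 0) :
    Descends π (truncExp φ N) (IsNilpotent.exp ψ) := by
  rw [IsNilpotent.exp_eq_sum hψ]
  exact sum _ fun j _ ↦ (h.pow j).rat_smul _

theorem truncLog (N : ℕ) (h : Descends π φ ψ) : Descends π (truncLog φ N) (nilLog N ψ) :=
  sum _ fun j _ ↦ (h.pow j).rat_smul _

end Descends

variable (π : M →ₗ[𝕜] Q)

/-- The endomorphisms of `Q` induced by elements of `T`. -/
def descendSubmodule (T : Submodule 𝕜 (Module.End 𝕜 M)) : Submodule ℚ (Module.End 𝕜 Q) where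
  carrier := {ψ | ∃ φ ∈ T, Descends π φ ψ}
  add_mem' := fun ⟨φ, hφ, h⟩ ⟨φ', hφ', h'⟩ ↦ ⟨φ + φ', T.add_mem hφ hφ', h.add h'⟩
  zero_mem' := ⟨0, T.zero_mem, Descends.zero⟩
  smul_mem' := fun q _ ⟨φ, hφ, h⟩ ↦ ⟨algebraMap ℚ 𝕜 q • φ, T.smul_mem _ hφ, h.rat_smul q⟩

/-- The endomorphisms of `Q` induced by elements of `G`. -/
def descendSubmonoid (G : Subgroup (Module.End 𝕜 M)ˣ) : Submonoid (Module.End 𝕜 Q) where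
  carrier := {ψ | ∃ g ∈ G, Descends π (g : Module.End 𝕜 M) ψ}
  mul_mem' := fun ⟨g, hg, h⟩ ⟨g', hg', h'⟩ ↦ ⟨g * g', G.mul_mem hg hg', h.mul h'⟩
  one_mem' := ⟨1, G.one_mem, Descends.one⟩

/-- The filtration of `End Q` by the shift of the image filtration. -/
def imageFiltration (Mf : ℕ → Submodule 𝕜 M) (i : ℕ) : Submodule ℚ (Module.End 𝕜 Q) :=
  (EndS (fun j ↦ (Mf j).map π) i).restrictScalars ℚ

variable {π} {Mf : ℕ → Submodule 𝕜 M} {N : ℕ}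

theorem Descends.mem_imageFiltration {φ : Module.End 𝕜 M} {ψ : Module.End 𝕜 Q}
    (h : Descends π φ ψ) {i : ℕ} (hφ : φ ∈ EndS Mf i) : ψ ∈ imageFiltration π Mf i := by
  rintro j _ ⟨x, hx, rfl⟩
  exact ⟨φ x, hφ j x hx, (h x).symm⟩

theorem isTruncatedFiltration_imageFiltration (hMf0 : Mf 0 = ⊤) (hMf : Antitone Mf)
    (hπ : Function.Surjective π) (hker : LinearMap.ker π = Mf (N + 1)) :
    IsTruncatedFiltration (R := Module.End 𝕜 Q) (imageFiltration π Mf) N where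
  antitone i j hij ψ hψ k x hx := Submodule.map_mono (hMf (by omega)) (hψ k x hx)
  one_mem j x hx := hx
  mul_mem {i j a b} ha hb k x hx := by
    have h := ha _ _ (hb k x hx)
    rwa [show k + j + i = k + (i + j) by omega] at h
  eq_bot := by
    refine (Submodule.eq_bot_iff _).mpr fun ψ hψ ↦ LinearMap.ext fun y ↦ ?_
    obtain ⟨x, rfl⟩ := hπ y
    obtain ⟨x', hx', h⟩ := hψ 0 (π x) ⟨x, by simp [hMf0], rfl⟩
    rw [← h, LinearMap.zero_apply, ← LinearMap.mem_ker, hker]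
    simpa using hx'

theorem HasTruncExpLog.isExpLogPair (hMf0 : Mf 0 = ⊤) (hMf : Antitone Mf)
    (hπ : Function.Surjective π) (hker : LinearMap.ker π = Mf (N + 1))
    {G : Subgroup (Module.End 𝕜 M)ˣ} (hG : (G : Set (Module.End 𝕜 M)ˣ) ⊆ GLFil Mf 1)
    {T : Submodule 𝕜 (Module.End 𝕜 M)} (hT : T ≤ EndS Mf 1) (hTG : HasTruncExpLog Mf T G) :
    IsExpLogPair (R := Module.End 𝕜 Q) (imageFiltration π Mf) N (descendSubmodule π T)
      (descendSubmonoid π G) := by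
  have hF := isTruncatedFiltration_imageFiltration hMf0 hMf hπ hker
  have hle : descendSubmodule π T ≤ imageFiltration π Mf 1 :=
    fun ψ ⟨φ, hφ, h⟩ ↦ h.mem_imageFiltration (hT hφ)
  have hker' {φ : Module.End 𝕜 M} (hφ : φ ∈ EndS Mf (N + 1)) (x : M) : φ x ∈ LinearMap.ker π := by
    have := hφ 0 x (by simp [hMf0])
    rwa [zero_add, ← hker] at this
  have hzero {φ : Module.End 𝕜 M} {ψ : Module.End 𝕜 Q} (h : Descends π φ ψ)
      (hφ : ∀ z, ¬ ordM Mf (φ z) ≤ N) : ψ = 0 :=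
    h.ext hπ (Descends.zero.congr fun x ↦ by
      rw [hker, sub_zero]
      exact (lt_ordM_iff hMf).mp (not_le.mp (hφ x)))
  refine ⟨hle, fun ψ ⟨g, hg, h⟩ ↦ (h.sub Descends.one).mem_imageFiltration (hG hg).2.2.1, ?_, ?_⟩
  · rintro ψ ⟨φ, hφ, h⟩
    by_cases hz : ∃ z, ordM Mf (φ z) ≤ N
    · obtain ⟨z, hz⟩ := hz
      obtain ⟨g, hg, hgφ⟩ := hTG.1 z φ hφ (hz.trans_lt (ENat.natCast_lt_top N)) N hz
      exact ⟨g, hg, (h.truncExp (hF.pow_eq_zero (hle ⟨φ, hφ, h⟩))).congr (hker' hgφ)⟩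
    · rw [hzero h (not_exists.mp hz), IsNilpotent.exp_zero]
      exact Submonoid.one_mem _
  · rintro ψ ⟨g, hg, h⟩
    by_cases hz : ∃ z, ordM Mf (((g : Module.End 𝕜 M) - 1) z) ≤ N
    · obtain ⟨z, hz⟩ := hz
      obtain ⟨ξ, hξ, hgξ⟩ := hTG.2 z g hg (hz.trans_lt (ENat.natCast_lt_top N)) N hz
      exact ⟨ξ, hξ, ((h.sub Descends.one).truncLog N).congr (hker' hgξ)⟩
    · have h0 : nilLog N (0 : Module.End 𝕜 Q) = 0 := Finset.sum_eq_zero fun j hj ↦ by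
        rw [zero_pow (by have := (Finset.mem_Icc.mp hj).1; omega), smul_zero]
      rw [hzero (h.sub Descends.one) (not_exists.mp hz), h0]
      exact Submodule.zero_mem _

end Descent

/-- over a ring containing ℚ, if the pairs `(T_G, G^{(1)})`, `(T_H, H^{(1)})`
admit truncated exponential/logarithm correspondences, the subgroup generated by
`G^{(1)} ∪ H^{(1)}` equals `G^{(1)}·H^{(1)}`, and `[T_G, T_H] ⊆ T_H`, then
`(T_G + T_H, G^{(1)}·H^{(1)})` is pointwise of Lie type for the index 1. -/
theorem statement8 (Mf : ℕ → Submodule 𝕜 M) (hMf0 : Mf 0 = ⊤) (hMf : Antitone Mf)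
    (G H : Subgroup (Module.End 𝕜 M)ˣ)
    (hG : (G : Set (Module.End 𝕜 M)ˣ) ⊆ GLFil Mf 1)
    (hH : (H : Set (Module.End 𝕜 M)ˣ) ⊆ GLFil Mf 1)
    (TG TH : Submodule 𝕜 (Module.End 𝕜 M))
    (hTG : TG ≤ EndS Mf 1) (hTH : TH ≤ EndS Mf 1)
    (hexpG : HasTruncExpLog Mf TG G) (hexpH : HasTruncExpLog Mf TH H)
    (hgen : ((G ⊔ H : Subgroup (Module.End 𝕜 M)ˣ) : Set (Module.End 𝕜 M)ˣ)
      = {u | ∃ g ∈ G, ∃ h ∈ H, u = g * h})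
    (hcomm : ∀ ξ ∈ TG, ∀ η ∈ TH, ξ * η - η * ξ ∈ TH) :
    (∀ ξ ∈ (TG ⊔ TH : Submodule 𝕜 (Module.End 𝕜 M)), ∀ z : M,
      ∃ u : (Module.End 𝕜 M)ˣ, (∃ g ∈ G, ∃ h ∈ H, u = g * h) ∧
        (ordM Mf (ξ z) < ⊤ →
          ordM Mf (((u : Module.End 𝕜 M) - 1 - ξ) z) > ordM Mf (ξ z))) ∧
    (∀ u : (Module.End 𝕜 M)ˣ, (∃ g ∈ G, ∃ h ∈ H, u = g * h) → ∀ z : M,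
      ∃ ξ ∈ (TG ⊔ TH : Submodule 𝕜 (Module.End 𝕜 M)),
        (ordM Mf (((u : Module.End 𝕜 M) - 1) z) < ⊤ →
          ordM Mf (((u : Module.End 𝕜 M) - 1 - ξ) z)
            > ordM Mf (((u : Module.End 𝕜 M) - 1) z))) := by
  have hcomm' {Q : Type _} [AddCommGroup Q] [Module 𝕜 Q] [Module ℚ Q] (π : M →ₗ[𝕜] Q) :
      ∀ x ∈ descendSubmodule π TG, ∀ y ∈ descendSubmodule π TH,
        x * y - y * x ∈ descendSubmodule π TH :=
    fun _ ⟨φ, hφ, h⟩ _ ⟨φ', hφ', h'⟩ ↦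
      ⟨φ * φ' - φ' * φ, hcomm φ hφ φ' hφ', (h.mul h').sub (h'.mul h)⟩
  have hker {n : ℕ} : LinearMap.ker (Mf n).mkQ = Mf n := Submodule.ker_mkQ _
  constructor
  · intro ξ hξ z
    obtain ⟨N, hN⟩ | htop : (∃ N : ℕ, ordM Mf (ξ z) = N) ∨ ordM Mf (ξ z) = ⊤ := by
      cases ordM Mf (ξ z) with
      | top => exact Or.inr rfl
      | coe N => exact Or.inl ⟨N, rfl⟩
    swap
    · exact ⟨1, ⟨1, G.one_mem, 1, H.one_mem, (mul_one 1).symm⟩, fun h ↦ absurd htop h.ne⟩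
    have hξ1 : ξ ∈ EndS Mf 1 := sup_le hTG hTH hξ
    have hN1 : 1 ≤ N := by
      have h := one_le_ordM_apply hMf0 hMf hξ1 z
      rw [hN] at h
      exact_mod_cast h
    let _ : Module ℚ (M ⧸ Mf (N + 1)) := Module.compHom _ (algebraMap ℚ 𝕜)
    have hπ := (Mf (N + 1)).mkQ_surjective
    obtain ⟨ξ₁, hξ₁, ξ₂, hξ₂, rfl⟩ := Submodule.mem_sup.mp hξ
    obtain ⟨ψ₁, hψ₁⟩ := exists_descends_mkQ hMf (hTG hξ₁) (N + 1)
    obtain ⟨ψ₂, hψ₂⟩ := exists_descends_mkQ hMf (hTH hξ₂) (N + 1)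
    have hF := isTruncatedFiltration_imageFiltration hMf0 hMf hπ hker
    have hψ := hψ₁.add hψ₂
    obtain ⟨_, ⟨g, hg, hgψ⟩, _, ⟨h, hh, hhψ⟩, heq⟩ := hF.exp_add_mem_mul hN1
      (hexpG.isExpLogPair hMf0 hMf hπ hker hG hTG) (hexpH.isExpLogPair hMf0 hMf hπ hker hH hTH)
      (hcomm' _) ⟨ξ₁, hξ₁, hψ₁⟩ ⟨ξ₂, hξ₂, hψ₂⟩
    refine ⟨g * h, ⟨g, hg, h, hh, rfl⟩, fun _ ↦ ?_⟩
    have hzero : (ψ₁ + ψ₂) ((ψ₁ + ψ₂) ((Mf (N + 1)).mkQ z)) = 0 := by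
      rw [hψ, hψ, ← LinearMap.mem_ker, hker]
      exact hξ1 N _ (mem_of_le_ordM hMf0 hMf hN.ge)
    have hexp := exp_apply_of_apply_apply_eq_zero
      (hF.isNilpotent (hψ.mem_imageFiltration hξ1)) hzero
    rw [heq, hgψ.mul hhψ, hψ] at hexp
    rw [gt_iff_lt, hN, lt_ordM_iff hMf, ← hker (n := N + 1), LinearMap.mem_ker]
    simp only [LinearMap.sub_apply, map_sub, Units.val_mul, hexp, Module.End.one_apply]
    abel
  · rintro _ ⟨g, hg, h, hh, rfl⟩ z
    set φ : Module.End 𝕜 M := ((g * h : (Module.End 𝕜 M)ˣ) : Module.End 𝕜 M) - 1 with hφ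
    obtain ⟨N, hN⟩ | htop : (∃ N : ℕ, ordM Mf (φ z) = N) ∨ ordM Mf (φ z) = ⊤ := by
      cases ordM Mf (φ z) with
      | top => exact Or.inr rfl
      | coe N => exact Or.inl ⟨N, rfl⟩
    swap
    · exact ⟨0, Submodule.zero_mem _, fun h ↦ absurd htop h.ne⟩
    have hφ1 : φ ∈ EndS Mf 1 := units_mul_sub_one_mem_EndS (hG hg) (hH hh)
    have hN1 : 1 ≤ N := by
      have h := one_le_ordM_apply hMf0 hMf hφ1 z
      rw [hN] at h
      exact_mod_cast h
    let _ : Module ℚ (M ⧸ Mf (N + 1)) := Module.compHom _ (algebraMap ℚ 𝕜)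
    have hπ := (Mf (N + 1)).mkQ_surjective
    obtain ⟨γ, hγ⟩ := exists_descends_mkQ hMf (hG hg).2.2.1 (N + 1)
    obtain ⟨η, hη⟩ := exists_descends_mkQ hMf (hH hh).2.2.1 (N + 1)
    have hγ' := hγ.add Descends.one
    have hη' := hη.add Descends.one
    rw [sub_add_cancel] at hγ' hη'
    have hF := isTruncatedFiltration_imageFiltration hMf0 hMf hπ hker
    have hψ : Descends (Mf (N + 1)).mkQ φ ((γ + 1) * (η + 1) - 1) := (hγ'.mul hη').sub Descends.one
    obtain ⟨_, ⟨ξ₁, hξ₁, hψ₁⟩, _, ⟨ξ₂, hξ₂, hψ₂⟩, heq⟩ := hF.nilLog_mul_mem hN1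
      (hexpG.isExpLogPair hMf0 hMf hπ hker hG hTG) (hexpH.isExpLogPair hMf0 hMf hπ hker hH hTH)
      (hcomm' _) ⟨g, hg, hγ'⟩ ⟨h, hh, hη'⟩
    refine ⟨ξ₁ + ξ₂, Submodule.add_mem_sup hξ₁ hξ₂, fun _ ↦ ?_⟩
    have hlog := nilLog_apply_of_apply_apply_eq_zero hN1 (y := (Mf (N + 1)).mkQ z) (by
      rw [hψ, hψ, ← LinearMap.mem_ker, hker]
      exact hφ1 N _ (mem_of_le_ordM hMf0 hMf hN.ge))
    rw [heq, hψ₁.add hψ₂, hψ] at hlog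
    rw [gt_iff_lt, hN, lt_ordM_iff hMf, ← hker (n := N + 1), LinearMap.mem_ker,
      LinearMap.sub_apply, map_sub, hlog, sub_self]
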